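/- For every Banach space (X,‖·‖_X), every n ∈ ℕ, every f : {−1,1}^n → X, and every s > 0, one has E_ε[‖f(ε) − E_δ[f(δ)]‖_X] ≤ e^{ns} · log(e^s/(e^s − 1)) · E_ε E_δ[‖Σ_{i=1}^n δ_i ∂_i f(ε)‖_X], where ε and δ are independent and uniformly distributed over {−1,1}^n. -/

import Mathlib

open scoped BigOperators

universe u

/-- The `j`-th partial difference operator
`∂ⱼ f(ε) = (f(ε) - f(ε₁,…,ε_{j-1},-ε_j,ε_{j+1},…,ε_n))/2` on the discrete cube. -/
noncomputable def discDeriv {X : Type u} [NormedAddCommGroup X] [NormedSpace ℝ X] {n : ℕ}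
    (f : (Fin n → Bool) → X) (j : Fin n) (ε : Fin n → Bool) : X :=
  (2 : ℝ)⁻¹ • (f ε - f (Function.update ε j (!ε j)))

/-- The real sign `±1` associated to a Boolean coordinate of the discrete cube `{-1,1}ⁿ`. -/
noncomputable def rsign (b : Bool) : ℝ := if b then 1 else -1

/-!
Let `T_θ` be convolution on the cube with the product density `∏ᵢ (1 + θᵢ ηᵢ) / 2`. Then
`T_θ T_φ = T_{θφ}`, `T_1` is the identity, `T_0 f` is the mean of `f`, and the `L¹` operator norm of
`T_θ` is at most `∏ᵢ max 1 |θᵢ|`. Since `f - 𝔼 f = T_{eˢ} (T_{e⁻ˢ} f - T_0 f)`, going backwards from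
`T_{e⁻ˢ}` costs the factor `e^{ns}`.

It remains to integrate `‖d/dρ T_ρ f‖₁ ≤ (1 - ρ)⁻¹ 𝔼_δ ‖∑ᵢ δᵢ ∂ᵢ f‖₁` over `ρ ∈ [0, e⁻ˢ]`. As the
density is affine in each `θᵢ`, the derivative is exactly
`(1 - ρ)⁻¹ 𝔼_δ T_{ρ + (1 - ρ) δ} (∑ᵢ δᵢ ∂ᵢ f)`, and every `T_{ρ + (1 - ρ) δ}` is a contraction
because `ρ + (1 - ρ) δᵢ ∈ {1, 2ρ - 1}`.
-/

open scoped symmDiff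

lemma sum_bihimp_left {B M : Type*} [BooleanAlgebra B] [Fintype B] [AddCommMonoid M] (g : B → M)
    (a : B) : ∑ b, g (a ⇔ b) = ∑ b, g b :=
  (bihimp_right_involutive a).bijective.sum_comp g

lemma sum_bihimp_right {B M : Type*} [BooleanAlgebra B] [Fintype B] [AddCommMonoid M] (g : B → M)
    (a : B) : ∑ b, g (b ⇔ a) = ∑ b, g b :=
  (bihimp_left_involutive a).bijective.sum_comp g

/-- Convolution of a scalar weight with a vector-valued function on a finite Boolean algebra, which
is a group of exponent two under `⇔`. With `true` encoding the sign `1`, the operation `⇔` on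
`Fin n → Bool` is the coordinatewise product of signs. -/
noncomputable def bihimpConv {B X : Type*} [BooleanAlgebra B] [Fintype B] [AddCommGroup X]
    [Module ℝ X] (w : B → ℝ) (f : B → X) (a : B) : X :=
  ∑ b, w b • f (a ⇔ b)

section Convolution

variable {B X : Type*} [BooleanAlgebra B] [Fintype B]

section Algebra

variable [AddCommGroup X] [Module ℝ X]

lemma bihimpConv_sub_right (w : B → ℝ) (f g : B → X) :
    bihimpConv w (f - g) = bihimpConv w f - bihimpConv w g := by
  funext a
  simp only [bihimpConv, Pi.sub_apply, smul_sub, Finset.sum_sub_distrib]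

lemma bihimpConv_sum_left {κ : Type*} (s : Finset κ) (w : κ → B → ℝ) (f : B → X) (a : B) :
    bihimpConv (∑ k ∈ s, w k) f a = ∑ k ∈ s, bihimpConv (w k) f a := by
  simp only [bihimpConv, Finset.sum_apply, Finset.sum_smul]
  exact Finset.sum_comm

lemma bihimpConv_sum_smul_right {κ : Type*} (s : Finset κ) (w : B → ℝ) (c : κ → ℝ)
    (f : κ → B → X) (a : B) :
    bihimpConv w (∑ k ∈ s, c k • f k) a = ∑ k ∈ s, bihimpConv (c k • w) (f k) a := by
  simp only [bihimpConv, Finset.sum_apply, Pi.smul_apply, Finset.smul_sum, smul_assoc]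
  rw [Finset.sum_comm]
  simp only [smul_comm (w _) (c _)]

lemma bihimpConv_smul_left (c : ℝ) (w : B → ℝ) (f : B → X) (a : B) :
    bihimpConv (c • w) f a = c • bihimpConv w f a := by
  simp only [bihimpConv, Pi.smul_apply, smul_assoc, Finset.smul_sum]

lemma bihimpConv_bihimpConv (v w : B → ℝ) (f : B → X) :
    bihimpConv v (bihimpConv w f) = bihimpConv (bihimpConv v w) f := by
  funext a
  calc ∑ b, v b • ∑ c, w c • f (a ⇔ b ⇔ c)
      = ∑ b, v b • ∑ c, w (b ⇔ c) • f (a ⇔ c) := by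
        refine Finset.sum_congr rfl fun b _ ↦ ?_
        rw [← sum_bihimp_left _ b]
        simp only [bihimp_assoc, bihimp_bihimp_cancel_left]
    _ = ∑ c, (∑ b, v b • w (c ⇔ b)) • f (a ⇔ c) := by
        simp only [Finset.smul_sum, Finset.sum_smul, smul_assoc]
        rw [Finset.sum_comm]
        simp only [bihimp_comm]

lemma bihimpConv_single_top [DecidableEq B] (f : B → X) :
    bihimpConv (Pi.single ⊤ 1) f = f := by
  funext a
  simp [bihimpConv, Pi.single_apply]

lemma bihimpConv_const (c : ℝ) (f : B → X) (a : B) :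
    bihimpConv (fun _ ↦ c) f a = c • ∑ b, f b := by
  rw [bihimpConv, ← Finset.smul_sum, sum_bihimp_left]

end Algebra

lemma sum_norm_bihimpConv_le [SeminormedAddCommGroup X] [NormedSpace ℝ X] (w : B → ℝ)
    (f : B → X) : ∑ a, ‖bihimpConv w f a‖ ≤ (∑ b, |w b|) * ∑ a, ‖f a‖ :=
  calc ∑ a, ‖∑ b, w b • f (a ⇔ b)‖
      ≤ ∑ a, ∑ b, |w b| * ‖f (a ⇔ b)‖ :=
        Finset.sum_le_sum fun a _ ↦ norm_sum_le_of_le _ fun b _ ↦ (norm_smul _ _).le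
    _ = ∑ b, |w b| * ∑ a, ‖f (a ⇔ b)‖ := by
        rw [Finset.sum_comm]
        simp only [Finset.mul_sum]
    _ = (∑ b, |w b|) * ∑ a, ‖f a‖ := by
        simp only [sum_bihimp_right fun a ↦ ‖f a‖, Finset.sum_mul]

end Convolution

lemma bihimp_update_not {ι : Type*} [DecidableEq ι] (ε η : ι → Bool) (i : ι) :
    ε ⇔ Function.update η i (!η i) = Function.update (ε ⇔ η) i (!(ε ⇔ η) i) := by
  funext j
  rcases eq_or_ne j i with rfl | hj
  · simp only [Pi.bihimp_apply, Function.update_self]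
    cases ε j <;> cases η j <;> rfl
  · simp [hj]

lemma sum_update_not {ι M : Type*} [Fintype ι] [DecidableEq ι] [AddCommMonoid M]
    (g : (ι → Bool) → M) (i : ι) : ∑ η, g (Function.update η i (!η i)) = ∑ η, g η :=
  have involutive : Function.Involutive fun η : ι → Bool ↦ Function.update η i (!η i) :=
    fun η ↦ by simp
  involutive.bijective.sum_comp g

lemma rsign_not (b : Bool) : rsign (!b) = -rsign b := by
  cases b <;> simp [rsign]

lemma rsign_bihimp (a b : Bool) : rsign (a ⇔ b) = rsign a * rsign b := by
  cases a <;> cases b <;> simp [rsign, bihimp]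

lemma abs_one_add_add_abs_one_sub (t : ℝ) : |1 + t| + |1 - t| = 2 * max 1 |t| := by
  rcases abs_cases (1 + t) with h | h <;> rcases abs_cases (1 - t) with h' | h' <;>
    rcases abs_cases t with h'' | h'' <;> rcases max_cases 1 |t| with hm | hm <;> linarith

/-- The density of a random sign vector with independent coordinates of means `θ i`; when some
`|θ i| > 1` it is a signed kernel. -/
noncomputable def noiseKernel {ι : Type*} [Fintype ι] (θ : ι → ℝ) (η : ι → Bool) : ℝ :=
  ∏ i, (1 + θ i * rsign (η i)) / 2

/-- The partial derivative of `noiseKernel θ η` with respect to `θ i`. -/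
noncomputable def noiseKernelPartial {ι : Type*} [Fintype ι] [DecidableEq ι] (θ : ι → ℝ) (i : ι)
    (η : ι → Bool) : ℝ :=
  (∏ j ∈ Finset.univ.erase i, (1 + θ j * rsign (η j)) / 2) * (rsign (η i) / 2)

/-- The noise operator `T_θ`, which multiplies the Walsh function of `S` by `∏ i ∈ S, θ i`. At
`θ = e⁻ᵗ` it is the heat semigroup at time `t`; values `θ i > 1` run the heat flow backwards. -/
noncomputable def noiseOp {ι X : Type*} [Fintype ι] [DecidableEq ι] [AddCommGroup X] [Module ℝ X]
    (θ : ι → ℝ) (f : (ι → Bool) → X) : (ι → Bool) → X :=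
  bihimpConv (noiseKernel θ) f

section NoiseKernel

variable {ι : Type*} [Fintype ι]

lemma noiseKernel_zero (η : ι → Bool) : noiseKernel 0 η = (2 ^ Fintype.card ι)⁻¹ := by
  simp [noiseKernel]

lemma noiseKernel_one : noiseKernel (1 : ι → ℝ) = Pi.single ⊤ 1 := by
  funext η
  rcases eq_or_ne η ⊤ with rfl | hη
  · simp [noiseKernel, rsign]
  · obtain ⟨i, hi⟩ := Function.ne_iff.mp hη
    have hηi : η i = false := by simpa using hi
    rw [Pi.single_eq_of_ne hη]
    exact Finset.prod_eq_zero (Finset.mem_univ i) (by simp [hηi, rsign])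

variable [DecidableEq ι]

lemma sum_abs_noiseKernel (θ : ι → ℝ) :
    ∑ η, |noiseKernel θ η| = ∏ i, max 1 |θ i| := by
  simp only [noiseKernel, Finset.abs_prod]
  rw [← Fintype.prod_sum fun i b ↦ |(1 + θ i * rsign b) / 2|]
  refine Finset.prod_congr rfl fun i _ ↦ ?_
  have h := abs_one_add_add_abs_one_sub (θ i)
  simp only [Fintype.sum_bool, rsign, if_true, Bool.false_eq_true, if_false, abs_div, abs_two,
    mul_one, mul_neg, ← sub_eq_add_neg]
  linarith

lemma bihimpConv_noiseKernel (θ φ : ι → ℝ) :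
    bihimpConv (noiseKernel θ) (noiseKernel φ) = noiseKernel (θ * φ) := by
  funext η
  simp only [bihimpConv, noiseKernel, smul_eq_mul, ← Finset.prod_mul_distrib, Pi.bihimp_apply,
    rsign_bihimp]
  rw [← Fintype.prod_sum fun i b ↦
    (1 + θ i * rsign b) / 2 * ((1 + φ i * (rsign (η i) * rsign b)) / 2)]
  refine Finset.prod_congr rfl fun i _ ↦ ?_
  simp only [Fintype.sum_bool, rsign, if_true, Bool.false_eq_true, if_false, Pi.mul_apply]
  ring

lemma hasDerivAt_noiseKernel_const (ρ : ℝ) (η : ι → Bool) :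
    HasDerivAt (fun r ↦ noiseKernel (fun _ ↦ r) η)
      (∑ i, noiseKernelPartial (fun _ ↦ ρ) i η) ρ := by
  have factor (i : ι) :
      HasDerivAt (fun r ↦ (1 + r * rsign (η i)) / 2) (rsign (η i) / 2) ρ := by
    simpa using (((hasDerivAt_id ρ).mul_const (rsign (η i))).const_add 1).div_const 2
  exact HasDerivAt.fun_finsetProd (u := Finset.univ) fun i _ ↦ factor i

lemma noiseKernelPartial_update_not (θ : ι → ℝ) (i : ι) (η : ι → Bool) :
    noiseKernelPartial θ i (Function.update η i (!η i)) = -noiseKernelPartial θ i η := by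
  have others : ∏ j ∈ Finset.univ.erase i, (1 + θ j * rsign (Function.update η i (!η i) j)) / 2 =
      ∏ j ∈ Finset.univ.erase i, (1 + θ j * rsign (η j)) / 2 :=
    Finset.prod_congr rfl fun j hj ↦ by
      rw [Function.update_of_ne (Finset.ne_of_mem_erase hj)]
  rw [noiseKernelPartial, noiseKernelPartial, others, Function.update_self, rsign_not, neg_div,
    mul_neg]

-- `noiseKernel` is affine in each parameter, so averaging against the sign `δ i` computes an exact
-- difference quotient in `θ i` and leaves the other parameters at their means.
lemma sum_rsign_mul_noiseKernel (θ κ : ι → ℝ) (i : ι) (η : ι → Bool) :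
    ∑ δ : ι → Bool, rsign (δ i) * noiseKernel (fun j ↦ θ j + κ j * rsign (δ j)) η =
      2 ^ Fintype.card ι * κ i * noiseKernelPartial θ i η := by
  let factor (j : ι) (b : Bool) : ℝ := (1 + (θ j + κ j * rsign b) * rsign (η j)) / 2
  have sum_factor (j : ι) : ∑ b, factor j b = 2 * ((1 + θ j * rsign (η j)) / 2) := by
    simp only [factor, Fintype.sum_bool, rsign, if_true, Bool.false_eq_true, if_false]
    ring
  have sum_rsign_mul_factor (j : ι) :
      ∑ b, rsign b * factor j b = 2 * (κ j * (rsign (η j) / 2)) := by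
    simp only [factor, Fintype.sum_bool, rsign, if_true, Bool.false_eq_true, if_false]
    ring
  calc ∑ δ : ι → Bool, rsign (δ i) * ∏ j, factor j (δ j)
      = ∑ δ : ι → Bool, ∏ j, (if j = i then rsign (δ j) else 1) * factor j (δ j) := by
        simp only [Finset.prod_mul_distrib, Finset.prod_ite_eq', Finset.mem_univ, if_true]
    _ = ∏ j, ∑ b, (if j = i then rsign b else 1) * factor j b :=
        (Fintype.prod_sum fun j b ↦ (if j = i then rsign b else 1) * factor j b).symm
    _ = (∏ j ∈ Finset.univ.erase i, ∑ b, factor j b) * ∑ b, rsign b * factor i b := by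
        rw [← Finset.prod_erase_mul _ _ (Finset.mem_univ i)]
        simp only [if_true]
        congr 1
        refine Finset.prod_congr rfl fun j hj ↦ ?_
        simp only [if_neg (Finset.ne_of_mem_erase hj), one_mul]
    _ = 2 ^ (Fintype.card ι - 1) * 2 * κ i * noiseKernelPartial θ i η := by
        simp only [sum_factor, sum_rsign_mul_factor, Finset.prod_mul_distrib, Finset.prod_const,
          Finset.card_erase_of_mem (Finset.mem_univ i), Finset.card_univ, noiseKernelPartial]
        ring
    _ = 2 ^ Fintype.card ι * κ i * noiseKernelPartial θ i η := by
        rw [pow_sub_one_mul (Fintype.card_pos_iff.mpr ⟨i⟩).ne']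

end NoiseKernel

section NoiseOp

variable {ι X : Type*} [Fintype ι] [DecidableEq ι]

section Algebra

variable [AddCommGroup X] [Module ℝ X]

lemma noiseOp_sub (θ : ι → ℝ) (f g : (ι → Bool) → X) :
    noiseOp θ (f - g) = noiseOp θ f - noiseOp θ g :=
  bihimpConv_sub_right _ f g

lemma noiseOp_noiseOp (θ φ : ι → ℝ) (f : (ι → Bool) → X) :
    noiseOp θ (noiseOp φ f) = noiseOp (θ * φ) f := by
  rw [noiseOp, noiseOp, bihimpConv_bihimpConv, bihimpConv_noiseKernel, noiseOp]

lemma noiseOp_one (f : (ι → Bool) → X) : noiseOp 1 f = f := by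
  rw [noiseOp, noiseKernel_one, bihimpConv_single_top]

lemma noiseOp_zero (f : (ι → Bool) → X) (ε : ι → Bool) :
    noiseOp 0 f ε = ((2 : ℝ) ^ Fintype.card ι)⁻¹ • ∑ δ, f δ := by
  rw [noiseOp, funext noiseKernel_zero, bihimpConv_const]

end Algebra

lemma sum_norm_noiseOp_le [SeminormedAddCommGroup X] [NormedSpace ℝ X] (θ : ι → ℝ)
    (f : (ι → Bool) → X) : ∑ ε, ‖noiseOp θ f ε‖ ≤ (∏ i, max 1 |θ i|) * ∑ ε, ‖f ε‖ :=
  sum_abs_noiseKernel θ ▸ sum_norm_bihimpConv_le (noiseKernel θ) f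

lemma hasDerivAt_noiseOp_const [NormedAddCommGroup X] [NormedSpace ℝ X] (f : (ι → Bool) → X)
    (ε : ι → Bool) (ρ : ℝ) :
    HasDerivAt (fun r ↦ noiseOp (fun _ ↦ r) f ε)
      (bihimpConv (∑ i, noiseKernelPartial (fun _ ↦ ρ) i) f ε) ρ := by
  simp only [noiseOp, bihimpConv, Finset.sum_apply]
  exact HasDerivAt.fun_sum fun η _ ↦ (hasDerivAt_noiseKernel_const ρ η).smul_const _

end NoiseOp

/-- The gradient of `f` contracted with the sign vector `δ`, that is `∑ᵢ δᵢ ∂ᵢ f`. -/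
noncomputable def signedGradient {X : Type u} [NormedAddCommGroup X] [NormedSpace ℝ X] {n : ℕ}
    (f : (Fin n → Bool) → X) (δ : Fin n → Bool) : (Fin n → Bool) → X :=
  ∑ i, rsign (δ i) • discDeriv f i

section Gradient

variable {X : Type u} [NormedAddCommGroup X] [NormedSpace ℝ X] {n : ℕ}

lemma bihimpConv_discDeriv_of_odd {w : (Fin n → Bool) → ℝ} {i : Fin n}
    (hw : ∀ η, w (Function.update η i (!η i)) = -w η) (f : (Fin n → Bool) → X) :
    bihimpConv w (discDeriv f i) = bihimpConv w f := by
  funext ε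
  have reflected : ∑ η, w η • f (Function.update (ε ⇔ η) i (!(ε ⇔ η) i)) =
      -∑ η, w η • f (ε ⇔ η) := by
    rw [← sum_update_not _ i, ← Finset.sum_neg_distrib]
    simp only [← bihimp_update_not, hw, Function.update_idem, Function.update_self, Bool.not_not,
      Function.update_eq_self, neg_smul]
  calc ∑ η, w η • discDeriv f i (ε ⇔ η)
      = (2 : ℝ)⁻¹ • (∑ η, w η • f (ε ⇔ η) -
          ∑ η, w η • f (Function.update (ε ⇔ η) i (!(ε ⇔ η) i))) := by
        simp only [discDeriv, smul_comm (w _) (2 : ℝ)⁻¹, smul_sub, Finset.sum_sub_distrib,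
          Finset.smul_sum]
    _ = bihimpConv w f ε := by
        rw [reflected, sub_neg_eq_add, ← two_smul ℝ, inv_smul_smul₀ two_ne_zero, bihimpConv]

lemma sum_noiseOp_signedGradient (θ : Fin n → ℝ) (c : ℝ) (f : (Fin n → Bool) → X)
    (ε : Fin n → Bool) :
    ∑ δ, noiseOp (fun j ↦ θ j + c * rsign (δ j)) (signedGradient f δ) ε =
      (2 ^ n * c) • bihimpConv (∑ i, noiseKernelPartial θ i) f ε := by
  let K (δ : Fin n → Bool) := noiseKernel fun j ↦ θ j + c * rsign (δ j)
  have sum_rsign_smul_K (i : Fin n) :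
      ∑ δ, rsign (δ i) • K δ = (2 ^ n * c) • noiseKernelPartial θ i := by
    funext η
    simpa [K] using sum_rsign_mul_noiseKernel θ (fun _ ↦ c) i η
  calc ∑ δ, bihimpConv (K δ) (signedGradient f δ) ε
      = ∑ i, bihimpConv (∑ δ, rsign (δ i) • K δ) (discDeriv f i) ε := by
        simp only [signedGradient, bihimpConv_sum_smul_right, bihimpConv_sum_left]
        exact Finset.sum_comm
    _ = ∑ i, (2 ^ n * c) • bihimpConv (noiseKernelPartial θ i) f ε := by
        simp only [sum_rsign_smul_K, bihimpConv_smul_left,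
          bihimpConv_discDeriv_of_odd (noiseKernelPartial_update_not θ _)]
    _ = (2 ^ n * c) • bihimpConv (∑ i, noiseKernelPartial θ i) f ε := by
        rw [bihimpConv_sum_left, Finset.smul_sum]

lemma sum_norm_bihimpConv_noiseKernelPartial_le {ρ : ℝ} (hρ₀ : 0 ≤ ρ) (hρ₁ : ρ < 1)
    (f : (Fin n → Bool) → X) :
    ∑ ε, ‖bihimpConv (∑ i, noiseKernelPartial (fun _ ↦ ρ) i) f ε‖ ≤
      (1 - ρ)⁻¹ * ((2 ^ n)⁻¹ * ∑ δ, ∑ ε, ‖signedGradient f δ ε‖) := by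
  let θ (δ : Fin n → Bool) (j : Fin n) : ℝ := ρ + (1 - ρ) * rsign (δ j)
  have abs_θ_le_one (δ j) : |θ δ j| ≤ 1 := by
    cases h : δ j <;> simp only [θ, h, rsign, if_true, Bool.false_eq_true, if_false, abs_le] <;>
      constructor <;> linarith
  have pos : 0 < (2 : ℝ) ^ n * (1 - ρ) := mul_pos (by positivity) (sub_pos.mpr hρ₁)
  rw [← mul_assoc, ← mul_inv_rev, le_inv_mul_iff₀ pos]
  calc 2 ^ n * (1 - ρ) * ∑ ε, ‖bihimpConv (∑ i, noiseKernelPartial (fun _ ↦ ρ) i) f ε‖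
      = ∑ ε, ‖∑ δ, noiseOp (θ δ) (signedGradient f δ) ε‖ := by
        simp only [θ, sum_noiseOp_signedGradient (fun _ ↦ ρ), norm_smul, Real.norm_of_nonneg pos.le,
          Finset.mul_sum]
    _ ≤ ∑ δ, ∑ ε, ‖noiseOp (θ δ) (signedGradient f δ) ε‖ := by
        rw [Finset.sum_comm]
        exact Finset.sum_le_sum fun ε _ ↦ norm_sum_le _ _
    _ ≤ ∑ δ, ∑ ε, ‖signedGradient f δ ε‖ := Finset.sum_le_sum fun δ _ ↦ by
        simpa [max_eq_left (abs_θ_le_one δ _)] using sum_norm_noiseOp_le (θ δ) (signedGradient f δ)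

end Gradient

lemma sum_norm_sub_le_of_sum_norm_deriv_le {α E : Type*} [Fintype α] [NormedAddCommGroup E]
    [NormedSpace ℝ E] {g g' : ℝ → α → E} {b b' : ℝ → ℝ} {x y : ℝ} (hxy : x ≤ y)
    (hg : ∀ t ∈ Set.Icc x y, ∀ k, HasDerivAt (fun r ↦ g r k) (g' t k) t)
    (hb : ∀ t ∈ Set.Icc x y, HasDerivAt b (b' t) t)
    (bound : ∀ t ∈ Set.Ico x y, ∑ k, ‖g' t k‖ ≤ b' t) :
    ∑ k, ‖g y k - g x k‖ ≤ b y - b x := by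
  let G (t : ℝ) : PiLp 1 fun _ : α ↦ E := WithLp.toLp 1 (g t - g x)
  have hG (t) (ht : t ∈ Set.Icc x y) : HasDerivAt G (WithLp.toLp 1 (g' t)) t :=
    (PiLp.continuousLinearEquiv 1 ℝ fun _ : α ↦ E).symm.hasFDerivAt.comp_hasDerivAt t
      ((hasDerivAt_pi.mpr (hg t ht)).sub_const (g x))
  have hB (t) (ht : t ∈ Set.Icc x y) : HasDerivAt (fun r ↦ b r - b x) (b' t) t :=
    (hb t ht).sub_const (b x)
  have norm_G_le := image_norm_le_of_norm_deriv_right_le_deriv_boundary'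
    (fun t ht ↦ (hG t ht).continuousAt.continuousWithinAt)
    (fun t ht ↦ (hG t (Set.Ico_subset_Icc_self ht)).hasDerivWithinAt)
    (by simp [G])
    (fun t ht ↦ (hB t ht).continuousAt.continuousWithinAt)
    (fun t ht ↦ (hB t (Set.Ico_subset_Icc_self ht)).hasDerivWithinAt)
    (fun t ht ↦ (PiLp.norm_eq_of_L1 _).trans_le (bound t ht))
    (Set.right_mem_Icc.mpr hxy)
  simpa only [PiLp.norm_eq_of_L1, G, Pi.sub_apply] using norm_G_le

lemma hasDerivAt_neg_log_one_sub {t : ℝ} (ht : t < 1) :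
    HasDerivAt (fun r ↦ -Real.log (1 - r)) (1 - t)⁻¹ t := by
  simpa [neg_div] using (((hasDerivAt_id t).const_sub 1).log (sub_pos.mpr ht).ne').fun_neg

lemma log_exp_div_exp_sub_one (s : ℝ) :
    Real.log (Real.exp s / (Real.exp s - 1)) = -Real.log (1 - Real.exp (-s)) := by
  rw [← Real.log_inv, Real.exp_neg, ← inv_div, sub_div, div_self (Real.exp_ne_zero s), one_div]

section Pisier

variable {X : Type u} [NormedAddCommGroup X] [NormedSpace ℝ X] {n : ℕ}

lemma sum_norm_noiseOp_sub_noiseOp_zero_le {ρ : ℝ} (hρ₀ : 0 ≤ ρ) (hρ₁ : ρ < 1)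
    (f : (Fin n → Bool) → X) :
    ∑ ε, ‖noiseOp (fun _ ↦ ρ) f ε - noiseOp 0 f ε‖ ≤
      -Real.log (1 - ρ) * ((2 ^ n)⁻¹ * ∑ δ, ∑ ε, ‖signedGradient f δ ε‖) := by
  have bound := sum_norm_sub_le_of_sum_norm_deriv_le hρ₀
    (fun t _ ε ↦ hasDerivAt_noiseOp_const f ε t)
    (fun t ht ↦ (hasDerivAt_neg_log_one_sub (ht.2.trans_lt hρ₁)).mul_const
      ((2 ^ n)⁻¹ * ∑ δ, ∑ ε, ‖signedGradient f δ ε‖))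
    (fun t ht ↦ sum_norm_bihimpConv_noiseKernelPartial_le ht.1 (ht.2.trans hρ₁) f)
  simpa [← Pi.zero_def] using bound

lemma sum_norm_sub_noiseOp_zero_le {s : ℝ} (hs : 0 ≤ s) (f : (Fin n → Bool) → X) :
    ∑ ε, ‖f ε - noiseOp 0 f ε‖ ≤
      Real.exp (n * s) * ∑ ε, ‖noiseOp (fun _ ↦ Real.exp (-s)) f ε - noiseOp 0 f ε‖ := by
  let θ : Fin n → ℝ := fun _ ↦ Real.exp s
  let φ : Fin n → ℝ := fun _ ↦ Real.exp (-s)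
  have mul_eq_one : θ * φ = 1 := by
    funext i
    simp [θ, φ, ← Real.exp_add]
  have backward_forward : noiseOp θ (noiseOp φ f - noiseOp 0 f) = f - noiseOp 0 f := by
    rw [noiseOp_sub, noiseOp_noiseOp, noiseOp_noiseOp, mul_eq_one, mul_zero, noiseOp_one]
  have growth : ∏ i, max 1 |θ i| = Real.exp (n * s) := by
    simp [θ, max_eq_right (Real.one_le_exp hs), Real.exp_nat_mul]
  simpa only [growth, backward_forward, Pi.sub_apply] using
    sum_norm_noiseOp_le θ (noiseOp φ f - noiseOp 0 f)

end Pisier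

theorem pisier_heat_semigroup_bound_general {X : Type u} [NormedAddCommGroup X] [NormedSpace ℝ X]
    (n : ℕ) (f : (Fin n → Bool) → X) (s : ℝ) (hs : 0 < s) :
    ((2 : ℝ) ^ n)⁻¹ * ∑ ε : Fin n → Bool,
        ‖f ε - ((2 : ℝ) ^ n)⁻¹ • ∑ δ : Fin n → Bool, f δ‖ ≤
      Real.exp (n * s) * Real.log (Real.exp s / (Real.exp s - 1)) *
        (((2 : ℝ) ^ n)⁻¹ * ∑ ε : Fin n → Bool, ((2 : ℝ) ^ n)⁻¹ * ∑ δ : Fin n → Bool,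
          ‖∑ i : Fin n, rsign (δ i) • discDeriv f i ε‖) := by
  have exp_neg_lt_one : Real.exp (-s) < 1 := Real.exp_lt_one_iff.mpr (neg_lt_zero.mpr hs)
  calc ((2 : ℝ) ^ n)⁻¹ * ∑ ε, ‖f ε - ((2 : ℝ) ^ n)⁻¹ • ∑ δ, f δ‖
      = (2 ^ n)⁻¹ * ∑ ε, ‖f ε - noiseOp 0 f ε‖ := by
        simp only [noiseOp_zero, Fintype.card_fin]
    _ ≤ (2 ^ n)⁻¹ * (Real.exp (n * s) *
          ∑ ε, ‖noiseOp (fun _ ↦ Real.exp (-s)) f ε - noiseOp 0 f ε‖) := by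
        gcongr
        exact sum_norm_sub_noiseOp_zero_le hs.le f
    _ ≤ (2 ^ n)⁻¹ * (Real.exp (n * s) * (-Real.log (1 - Real.exp (-s)) *
          ((2 ^ n)⁻¹ * ∑ δ, ∑ ε, ‖signedGradient f δ ε‖))) := by
        gcongr
        exact sum_norm_noiseOp_sub_noiseOp_zero_le (Real.exp_pos _).le exp_neg_lt_one f
    _ = _ := by
        rw [log_exp_div_exp_sub_one, Finset.sum_comm, ← Finset.mul_sum]
        simp only [signedGradient, Finset.sum_apply, Pi.smul_apply]
        ring

/-- The key inequality of Pisier's argument: for every Banach space `X`, every `n`, every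
`f : {-1,1}ⁿ → X` and every `s > 0`,
`𝔼_ε ‖f(ε) - 𝔼_δ f(δ)‖ ≤ e^{ns} log(e^s/(e^s-1)) 𝔼_ε 𝔼_δ ‖∑ᵢ δᵢ ∂ᵢ f(ε)‖`. -/
theorem pisier_heat_semigroup_bound {X : Type u} [NormedAddCommGroup X] [NormedSpace ℝ X]
    [CompleteSpace X] (n : ℕ) (f : (Fin n → Bool) → X) (s : ℝ) (hs : 0 < s) :
    ((2 : ℝ) ^ n)⁻¹ * ∑ ε : Fin n → Bool,
        ‖f ε - ((2 : ℝ) ^ n)⁻¹ • ∑ δ : Fin n → Bool, f δ‖ ≤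
      Real.exp (n * s) * Real.log (Real.exp s / (Real.exp s - 1)) *
        (((2 : ℝ) ^ n)⁻¹ * ∑ ε : Fin n → Bool, ((2 : ℝ) ^ n)⁻¹ * ∑ δ : Fin n → Bool,
          ‖∑ i : Fin n, rsign (δ i) • discDeriv f i ε‖) :=
  pisier_heat_semigroup_bound_general n f s hs
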